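/- Let ψ : ℝ_{>0} → ℝ_{>0} be a function with τ(ψ) = b_1 − b_n. If the function t ↦ ψ(t)·e^{(b_1 − b_n)t} is bounded on ℝ_{>0}, then S_Ad(ψ)^c = ∅, i.e., every g ∈ SL_n(ℝ) is ψ-Diophantine for the adjoint representation. -/

import Mathlib

/-!
Conjugation by `a_t` multiplies the `(i, j)` entry of a matrix by `e^{(bᵢ - bⱼ) t}`, so for `t ≥ 0`
it shrinks the Frobenius norm by a factor of at most `e^{-(b₁ - bₙ) t}`. Conjugation by a fixed `g`
shrinks it by at most a constant factor. Since a nonzero integer matrix has norm at least `1`, the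
first minimum of `Ad(a_t g) sl_n(ℤ)` is at least a constant multiple of `e^{-(b₁ - bₙ) t}`, and
hence of `ψ t`.
-/

open MeasureTheory Filter

attribute [local instance] Matrix.frobeniusNormedAddCommGroup

noncomputable section

/-- The Frobenius norm of a real matrix. -/
def frobNorm {n : ℕ} (X : Matrix (Fin n) (Fin n) ℝ) : ℝ :=
  Real.sqrt (∑ i, ∑ j, (X i j) ^ 2)

/-- The first minimum of a set of matrices: the infimum of the Frobenius norms of its
nonzero elements. -/
def firstMinM {n : ℕ} (Λ : Set (Matrix (Fin n) (Fin n) ℝ)) : ℝ :=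
  sInf {r | ∃ X ∈ Λ, X ≠ 0 ∧ frobNorm X = r}

/-- The diagonal matrix `a_t = diag(e^{b₁ t}, …, e^{bₙ t})`. -/
def aMat {n : ℕ} (b : Fin n → ℝ) (t : ℝ) : Matrix (Fin n) (Fin n) ℝ :=
  Matrix.diagonal fun i => Real.exp (b i * t)

/-- `SL_n(ℝ)` as the set of real `n × n` matrices of determinant one. -/
def SLset (n : ℕ) : Set (Matrix (Fin n) (Fin n) ℝ) := {g | g.det = 1}

/-- The lattice `sl_n(ℤ)` of trace-zero integer matrices, inside `sl_n(ℝ)`. -/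
def slZ (n : ℕ) : Set (Matrix (Fin n) (Fin n) ℝ) :=
  {X | (∃ m : Matrix (Fin n) (Fin n) ℤ, X = m.map (fun a => (a : ℝ))) ∧ Matrix.trace X = 0}

/-- The set of `ψ`-Diophantine elements of `SL_n(ℝ)` for the adjoint representation:
`Ad(g)X = g X g⁻¹`. -/
def SAdDio {n : ℕ} (b : Fin n → ℝ) (ψ : ℝ → ℝ) : Set (Matrix (Fin n) (Fin n) ℝ) :=
  {g | g ∈ SLset n ∧ ∃ C > 0, ∀ t > 0,
    C * ψ t ≤ firstMinM
      ((fun X => (aMat b t * g) * X * (aMat b t * g)⁻¹) '' slZ n)}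

/-- `τ(ψ) = liminf_{t → ∞} (-ln ψ(t))/t`, as an extended real number. -/
def tauE (ψ : ℝ → ℝ) : EReal :=
  liminf (fun t : ℝ => ((-Real.log (ψ t) / t : ℝ) : EReal)) atTop

theorem norm_le_norm_mul_norm_conj_mul_norm {R : Type*} [SeminormedRing R] {a b : R}
    (hba : b * a = 1) (x : R) : ‖x‖ ≤ ‖b‖ * ‖a * x * b‖ * ‖a‖ :=
  calc ‖x‖ = ‖b * (a * x * b) * a‖ := by
        rw [mul_assoc, mul_assoc (a * x), hba, mul_one, ← mul_assoc, hba, one_mul]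
    _ ≤ ‖b‖ * ‖a * x * b‖ * ‖a‖ := norm_mul₃_le

section FrobeniusNorm

variable {m n α : Type*} [Fintype m] [Fintype n]

theorem norm_entry_le_frobenius_norm [NormedAddCommGroup α] (A : Matrix m n α) (i : m) (j : n) :
    ‖A i j‖ ≤ ‖A‖ :=
  (PiLp.norm_apply_le (WithLp.toLp 2 (A i)) j).trans
    (PiLp.norm_apply_le (WithLp.toLp 2 fun k => WithLp.toLp 2 (A k)) i)

theorem frobenius_norm_le_of_norm_entry_le {β : Type*} [NormedAddCommGroup α]
    [NormedAddCommGroup β] {A : Matrix m n α} {B : Matrix m n β}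
    (h : ∀ i j, ‖A i j‖ ≤ ‖B i j‖) : ‖A‖ ≤ ‖B‖ := by
  rw [Matrix.frobenius_norm_def, Matrix.frobenius_norm_def]
  gcongr with i _ j _
  exact h i j

theorem one_le_frobenius_norm_of_int_ne_zero {A : Matrix m n ℤ} (hA : A ≠ 0) : 1 ≤ ‖A‖ := by
  obtain ⟨i, j, hij⟩ : ∃ i j, A i j ≠ 0 := by
    by_contra! h
    exact hA (Matrix.ext h)
  calc (1 : ℝ) ≤ ‖A i j‖ := by
        rw [Int.norm_eq_abs]
        exact_mod_cast Int.one_le_abs hij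
    _ ≤ ‖A‖ := norm_entry_le_frobenius_norm A i j

theorem exists_pos_mul_norm_le_norm_conj {𝕜 : Type*} [RCLike 𝕜] [DecidableEq n]
    {g : Matrix n n 𝕜} (hg : IsUnit g.det) :
    ∃ c > 0, ∀ X : Matrix n n 𝕜, c * ‖X‖ ≤ ‖g * X * g⁻¹‖ := by
  let _ := Matrix.frobeniusNormedRing (m := n) (α := 𝕜)
  have hK : 0 < ‖g⁻¹‖ * ‖g‖ + 1 := by positivity
  refine ⟨(‖g⁻¹‖ * ‖g‖ + 1)⁻¹, inv_pos.2 hK, fun X => ?_⟩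
  rw [inv_mul_le_iff₀ hK]
  calc ‖X‖ ≤ ‖g⁻¹‖ * ‖g * X * g⁻¹‖ * ‖g‖ :=
        norm_le_norm_mul_norm_conj_mul_norm (Matrix.nonsing_inv_mul g hg) X
    _ = ‖g⁻¹‖ * ‖g‖ * ‖g * X * g⁻¹‖ := mul_right_comm _ _ _
    _ ≤ (‖g⁻¹‖ * ‖g‖ + 1) * ‖g * X * g⁻¹‖ := by gcongr; exact le_add_of_nonneg_right zero_le_one

end FrobeniusNorm

variable {n : ℕ}

theorem frobNorm_eq_norm (X : Matrix (Fin n) (Fin n) ℝ) : frobNorm X = ‖X‖ := by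
  simp [frobNorm, Matrix.frobenius_norm_def, Real.sqrt_eq_rpow]

theorem le_firstMinM_image {Λ : Set (Matrix (Fin n) (Fin n) ℝ)} (hΛ : ∃ X ∈ Λ, X ≠ 0)
    {f : Matrix (Fin n) (Fin n) ℝ → Matrix (Fin n) (Fin n) ℝ} (hf : f 0 = 0) {c : ℝ} (hc : 0 < c)
    (h : ∀ X ∈ Λ, X ≠ 0 → c ≤ ‖f X‖) : c ≤ firstMinM (f '' Λ) := by
  refine le_csInf ?_ ?_
  · obtain ⟨X, hX, hX0⟩ := hΛ
    exact ⟨_, f X, ⟨X, hX, rfl⟩, norm_pos_iff.1 (hc.trans_le (h X hX hX0)), rfl⟩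
  · rintro _ ⟨_, ⟨X, hX, rfl⟩, hfX, rfl⟩
    rw [frobNorm_eq_norm]
    exact h X hX fun hX0 => hfX (by rw [hX0, hf])

theorem one_le_norm_of_mem_slZ {X : Matrix (Fin n) (Fin n) ℝ} (hX : X ∈ slZ n) (hX0 : X ≠ 0) :
    1 ≤ ‖X‖ := by
  obtain ⟨⟨A, rfl⟩, -⟩ := hX
  rw [Matrix.frobenius_norm_map_eq A _ Int.norm_cast_real]
  refine one_le_frobenius_norm_of_int_ne_zero fun hA => hX0 ?_
  rw [hA, Matrix.map_zero _ Int.cast_zero]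

theorem exists_mem_slZ_ne_zero (hn : 2 ≤ n) : ∃ X ∈ slZ n, X ≠ 0 := by
  have : Nontrivial (Fin n) := Fin.nontrivial_iff_two_le.2 hn
  obtain ⟨i, j, hij⟩ := exists_pair_ne (Fin n)
  refine ⟨Matrix.single i j 1, ⟨⟨Matrix.single i j 1, ?_⟩, ?_⟩, ?_⟩
  · simpa using (Matrix.map_single i j (1 : ℤ) (Int.castRingHom ℝ)).symm
  · exact Matrix.trace_single_eq_of_ne i j 1 hij
  · exact fun h => one_ne_zero (α := ℝ) (by simpa using congr_fun₂ h i j)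

theorem aMat_inv (b : Fin n → ℝ) (t : ℝ) : (aMat b t)⁻¹ = aMat b (-t) := by
  refine Matrix.inv_eq_right_inv ?_
  rw [aMat, aMat, Matrix.diagonal_mul_diagonal, ← Matrix.diagonal_one]
  congr with i
  simp [← Real.exp_add]

theorem aMat_conj_apply (b : Fin n → ℝ) (t : ℝ) (X : Matrix (Fin n) (Fin n) ℝ) (i j : Fin n) :
    (aMat b t * X * (aMat b t)⁻¹) i j = Real.exp ((b i - b j) * t) * X i j := by
  rw [aMat_inv, aMat, aMat, Matrix.mul_diagonal, Matrix.diagonal_mul, mul_right_comm,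
    ← Real.exp_add]
  ring_nf

attribute [local instance] Matrix.frobeniusNormSMulClass

theorem exp_neg_mul_norm_le_norm_aMat_conj {b : Fin n → ℝ} {w : ℝ} (hw : ∀ i j, b i - b j ≤ w)
    {t : ℝ} (ht : 0 ≤ t) (X : Matrix (Fin n) (Fin n) ℝ) :
    Real.exp (-(w * t)) * ‖X‖ ≤ ‖aMat b t * X * (aMat b t)⁻¹‖ := by
  calc Real.exp (-(w * t)) * ‖X‖ = ‖Real.exp (-(w * t)) • X‖ := by
        rw [norm_smul, Real.norm_of_nonneg (Real.exp_nonneg _)]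
    _ ≤ ‖aMat b t * X * (aMat b t)⁻¹‖ := frobenius_norm_le_of_norm_entry_le fun i j => by
        rw [aMat_conj_apply, Matrix.smul_apply, smul_eq_mul, norm_mul, norm_mul,
          Real.norm_of_nonneg (Real.exp_nonneg _), Real.norm_of_nonneg (Real.exp_nonneg _),
          ← neg_mul]
        gcongr
        linarith [hw j i]

theorem exists_pos_mul_exp_neg_le_firstMinM (hn : 2 ≤ n) {b : Fin n → ℝ} {w : ℝ}
    (hw : ∀ i j, b i - b j ≤ w) {g : Matrix (Fin n) (Fin n) ℝ} (hg : IsUnit g.det) :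
    ∃ c > 0, ∀ t ≥ 0, c * Real.exp (-(w * t)) ≤
      firstMinM ((fun X => (aMat b t * g) * X * (aMat b t * g)⁻¹) '' slZ n) := by
  obtain ⟨c, hc, hgconj⟩ := exists_pos_mul_norm_le_norm_conj hg
  refine ⟨c, hc, fun t ht => le_firstMinM_image (exists_mem_slZ_ne_zero hn) (by simp)
    (by positivity) fun X hX hX0 => ?_⟩
  calc c * Real.exp (-(w * t)) ≤ c * Real.exp (-(w * t)) * ‖X‖ :=
        le_mul_of_one_le_right (by positivity) (one_le_norm_of_mem_slZ hX hX0)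
    _ = Real.exp (-(w * t)) * (c * ‖X‖) := by ring
    _ ≤ Real.exp (-(w * t)) * ‖g * X * g⁻¹‖ := by gcongr; exact hgconj X
    _ ≤ ‖aMat b t * (g * X * g⁻¹) * (aMat b t)⁻¹‖ := exp_neg_mul_norm_le_norm_aMat_conj hw ht _
    _ = ‖(aMat b t * g) * X * (aMat b t * g)⁻¹‖ := by
        rw [Matrix.mul_inv_rev]
        simp only [Matrix.mul_assoc]

theorem SAdDio_compl_empty_of_bounded_general (hn : 2 ≤ n) {b : Fin n → ℝ} {w : ℝ}
    (hw : ∀ i j, b i - b j ≤ w) {ψ : ℝ → ℝ} (hbdd : ∃ M, ∀ t > 0, ψ t * Real.exp (w * t) ≤ M) :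
    SLset n \ SAdDio b ψ = ∅ := by
  rw [Set.sdiff_eq_empty]
  intro g hg
  obtain ⟨M, hM⟩ := hbdd
  obtain ⟨c, hc, hmin⟩ := exists_pos_mul_exp_neg_le_firstMinM hn hw (hg ▸ isUnit_one)
  have hM₁ : 0 < max M 1 := lt_max_of_lt_right one_pos
  refine ⟨hg, c / max M 1, by positivity, fun t ht => ?_⟩
  have hψ : ψ t / max M 1 ≤ Real.exp (-(w * t)) := by
    rw [div_le_iff₀ hM₁, Real.exp_neg, inv_mul_eq_div, le_div_iff₀ (Real.exp_pos _)]
    exact (hM t ht).trans (le_max_left M 1)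
  calc c / max M 1 * ψ t = c * (ψ t / max M 1) := by ring
    _ ≤ c * Real.exp (-(w * t)) := by gcongr
    _ ≤ firstMinM ((fun X => (aMat b t * g) * X * (aMat b t * g)⁻¹) '' slZ n) := hmin t ht.le

theorem SAdDio_compl_empty_of_bounded
    (n : ℕ) (hn : 2 ≤ n) (b : Fin n → ℝ)
    (hmono : ∀ i j : Fin n, i ≤ j → b j ≤ b i)
    (hsum : ∑ i, b i = 0) (hb : b ≠ 0)
    (ψ : ℝ → ℝ) (hψpos : ∀ t > 0, 0 < ψ t)
    (hτ : tauE ψ = ((b ⟨0, by omega⟩ - b ⟨n - 1, by omega⟩ : ℝ) : EReal))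
    (hbdd : ∃ M : ℝ, ∀ t > 0,
      ψ t * Real.exp ((b ⟨0, by omega⟩ - b ⟨n - 1, by omega⟩) * t) ≤ M) :
    SLset n \ SAdDio b ψ = ∅ := by
  exact SAdDio_compl_empty_of_bounded_general hn (fun i j => sub_le_sub
    (hmono _ i (Fin.mk_le_of_le_val i.val.zero_le)) (hmono j _ (Nat.le_sub_one_of_lt j.2))) hbdd

end
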